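/- Fix L ≥ 1 and for each ℓ ∈ {1,…,L} let (ξ_{n,ℓ})_{n≥1} be a real sequence, μ_ℓ > 0, h_ℓ ∈ [0,∞), and a_ℓ ∈ ℝ. Let (W_{n,ℓ})_{n≥0} be the DE-CuSum sequence started at 0 and (C_{n,ℓ})_{n≥0} the CuSum sequence started at 0, both driven by (ξ_{n,ℓ}). Then the DE-All stopping time inf{n ≥ 1 : W_{n,ℓ} > a_ℓ for all ℓ} is at least the ALL stopping time inf{n ≥ 1 : C_{n,ℓ} > a_ℓ for all ℓ} (in ℕ ∪ {∞}). In particular, under any probability measure generating the sensor observations, the expected stopping time of the DE-All scheme is at least that of the ALL scheme, so FAR(DE-All) ≤ FAR(ALL). -/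

import Mathlib

open MeasureTheory Filter Set ProbabilityTheory
open scoped ENNReal

/-- CuSum sequence started at `c`, driven by the sequence `ξ`
(`ξ n` is the `(n+1)`-th increment, so the sequence is indexed from 1 via `n ↦ ξ (n-1)`). -/
def cusum (ξ : ℕ → ℝ) (c : ℝ) : ℕ → ℝ
  | 0 => c
  | n + 1 => max 0 (cusum ξ c n + ξ n)
/-- DE-CuSum sequence with parameters `μ > 0` and `h ∈ [0,∞)`, started at `w`:
`W_{n+1} = min (W_n + μ) 0` if `W_n < 0`, and `W_{n+1} = max (W_n + ξ_{n+1}) (-h)` if `W_n ≥ 0`. -/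
noncomputable def deCusum (ξ : ℕ → ℝ) (μ h w : ℝ) : ℕ → ℝ
  | 0 => w
  | n + 1 =>
    if deCusum ξ μ h w n < 0 then min (deCusum ξ μ h w n + μ) 0
    else max (deCusum ξ μ h w n + ξ n) (-h)
/-- First time `n ≥ 1` at which `P n` holds, valued in `ℕ∞` with `inf ∅ = ∞`. -/
noncomputable def firstTime (P : ℕ → Prop) : ℕ∞ :=
  sInf ((↑) '' {n : ℕ | 1 ≤ n ∧ P n})

theorem cusum_succ_nonneg (ξ : ℕ → ℝ) (c : ℝ) (n : ℕ) : 0 ≤ cusum ξ c (n + 1) :=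
  le_max_left _ _

theorem cusum_add_le_cusum_succ (ξ : ℕ → ℝ) (c : ℝ) (n : ℕ) :
    cusum ξ c n + ξ n ≤ cusum ξ c (n + 1) :=
  le_max_right _ _

/- From a negative value the DE-CuSum statistic moves to at most `0`, which the CuSum statistic
dominates whatever its past; from a nonnegative value both statistics add the same increment. -/
theorem deCusum_le_cusum (ξ : ℕ → ℝ) (μ : ℝ) {h w c : ℝ} (hh : 0 ≤ h) (hwc : w ≤ c) (n : ℕ) :
    deCusum ξ μ h w n ≤ cusum ξ c n := by
  induction n with
  | zero => exact hwc
  | succ n ih =>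
    have cusum_nonneg : 0 ≤ cusum ξ c (n + 1) := cusum_succ_nonneg ξ c n
    rw [deCusum]
    split_ifs
    · exact (min_le_right _ _).trans cusum_nonneg
    · apply max_le
      · calc deCusum ξ μ h w n + ξ n ≤ cusum ξ c n + ξ n := by gcongr
          _ ≤ cusum ξ c (n + 1) := cusum_add_le_cusum_succ ξ c n
      · exact (neg_nonpos.2 hh).trans cusum_nonneg

theorem firstTime_antitone : Antitone firstTime := fun _ _ hPQ =>
  sInf_le_sInf <| image_mono fun n hn => ⟨hn.1, hPQ n hn.2⟩

theorem firstTime_forall_lt_anti {ι α : Type*} [Preorder α] (a : ι → α) {X Y : ι → ℕ → α}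
    (hXY : ∀ ℓ n, X ℓ n ≤ Y ℓ n) :
    firstTime (fun n => ∀ ℓ, a ℓ < Y ℓ n) ≤ firstTime (fun n => ∀ ℓ, a ℓ < X ℓ n) :=
  firstTime_antitone fun n hX ℓ => (hX ℓ).trans_le (hXY ℓ n)

theorem deAll_ge_all_general {ι : Type*} (ξ : ι → ℕ → ℝ) (μ a : ι → ℝ) {h w c : ι → ℝ}
    (hh : ∀ ℓ, 0 ≤ h ℓ) (hwc : ∀ ℓ, w ℓ ≤ c ℓ) :
    firstTime (fun n => ∀ ℓ, a ℓ < cusum (ξ ℓ) (c ℓ) n) ≤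
      firstTime (fun n => ∀ ℓ, a ℓ < deCusum (ξ ℓ) (μ ℓ) (h ℓ) (w ℓ) n) ∧
    ∀ {Ω : Type*} [MeasurableSpace Ω] (P : Measure Ω) (ζ : ι → ℕ → Ω → ℝ),
      ∫⁻ ω, (firstTime (fun n => ∀ ℓ, a ℓ < cusum (fun k => ζ ℓ k ω) (c ℓ) n) : ℝ≥0∞) ∂P ≤
        ∫⁻ ω, (firstTime
          (fun n => ∀ ℓ, a ℓ < deCusum (fun k => ζ ℓ k ω) (μ ℓ) (h ℓ) (w ℓ) n) : ℝ≥0∞) ∂P := by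
  have pathwise (η : ι → ℕ → ℝ) :
      firstTime (fun n => ∀ ℓ, a ℓ < cusum (η ℓ) (c ℓ) n) ≤
        firstTime (fun n => ∀ ℓ, a ℓ < deCusum (η ℓ) (μ ℓ) (h ℓ) (w ℓ) n) :=
    firstTime_forall_lt_anti a fun ℓ => deCusum_le_cusum (η ℓ) (μ ℓ) (hh ℓ) (hwc ℓ)
  exact ⟨pathwise ξ, fun P ζ =>
    lintegral_mono fun ω => ENat.toENNReal_le.2 (pathwise fun ℓ k => ζ ℓ k ω)⟩

/-- With `L ≥ 1` sensors, thresholds `a_ℓ`, the DE-All stopping time (first time the DE-CuSum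
statistics at all sensors simultaneously exceed their thresholds) is at least the ALL stopping
time (same with local CuSum statistics). In particular, under any probability measure
generating the sensor observations, the expected DE-All stopping time is at least the expected
ALL stopping time, so `FAR(DE-All) ≤ FAR(ALL)`. -/
theorem deAll_ge_all (L : ℕ) (hL : 1 ≤ L) (ξ : Fin L → ℕ → ℝ) (μ h a : Fin L → ℝ)
    (hμ : ∀ ℓ, 0 < μ ℓ) (hh : ∀ ℓ, 0 ≤ h ℓ) :
    firstTime (fun n => ∀ ℓ, a ℓ < cusum (ξ ℓ) 0 n) ≤
      firstTime (fun n => ∀ ℓ, a ℓ < deCusum (ξ ℓ) (μ ℓ) (h ℓ) 0 n) ∧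
    ∀ (Ω : Type) (_ : MeasurableSpace Ω) (P : Measure Ω), IsProbabilityMeasure P →
      ∀ ζ : Fin L → ℕ → Ω → ℝ,
        ∫⁻ ω, (firstTime (fun n => ∀ ℓ, a ℓ < cusum (fun k => ζ ℓ k ω) 0 n) : ℝ≥0∞) ∂P ≤
          ∫⁻ ω, (firstTime
            (fun n => ∀ ℓ, a ℓ < deCusum (fun k => ζ ℓ k ω) (μ ℓ) (h ℓ) 0 n) : ℝ≥0∞) ∂P := by
  have general := deAll_ge_all_general ξ μ a hh fun _ => le_refl (0 : ℝ)
  exact ⟨general.1, fun _ _ P _ => general.2 P⟩
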